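/- Let a > 0, E_D > E_T be real numbers, let α₁, …, α_N > 0 be the preference parameters of N prosumers, let α = max_n α_n, and suppose b > (α − 2a · log 2 · (E_D − E_T)) / log 2. Set p* = 2a·(E_D − E_T) + b. Then for every prosumer n and every e > 0, the buyer's utility satisfies α_n · log(1 + e)/log 2 − p*·e < 0; hence at the price p* every prosumer's optimal purchase of energy from the centralized power system is zero. -/

import Mathlib

/-- At the equilibrium price `p* = 2a·(E_D − E_T) + b`, where
`b > (α − 2a·log 2·(E_D − E_T)) / log 2` with `α = max_n α_n`, every prosumer `n` gets
strictly negative utility from buying any positive amount `e > 0` of energy from the CPS;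
hence every prosumer's optimal grid purchase is zero. -/
theorem all_prosumers_buy_zero (N : ℕ) (hN : 0 < N) (a b E_D E_T : ℝ) (ha : 0 < a)
    (hE : E_T < E_D) (αv : Fin N → ℝ) (hαpos : ∀ n, 0 < αv n) (A : ℝ)
    (hA : A = Finset.univ.sup' (Finset.univ_nonempty_iff.mpr (Fin.pos_iff_nonempty.mp hN)) αv)
    (hb : (A - 2 * a * Real.log 2 * (E_D - E_T)) / Real.log 2 < b)
    (p : ℝ) (hp : p = 2 * a * (E_D - E_T) + b) :
    ∀ n : Fin N, ∀ e : ℝ, 0 < e →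
      αv n * (Real.log (1 + e) / Real.log 2) - p * e < 0 := by
  intro n e he
  have hl : 0 < Real.log 2 := Real.log_pos (by norm_num)
  have hn : αv n ≤ A := by
    rw [hA]
    exact Finset.le_sup' αv (Finset.mem_univ n)
  have hlog : Real.log (1 + e) ≤ e := by
    have := Real.log_le_sub_one_of_pos (show 0 < 1 + e by linarith)
    linarith
  have hpl : A < p * Real.log 2 := by
    rw [div_lt_iff₀ hl] at hb
    rw [hp]
    linarith
  have h1 : αv n * Real.log (1 + e) ≤ αv n * e :=
    mul_le_mul_of_nonneg_left hlog (hαpos n).le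
  have h2 : αv n * e < p * Real.log 2 * e :=
    mul_lt_mul_of_pos_right (lt_of_le_of_lt hn hpl) he
  rw [sub_neg, ← mul_div_assoc, div_lt_iff₀ hl]
  linarith
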